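/- arXiv:2005.04843 — 3 statements merged into one kernel-verified Lean document; each statement's English description precedes it below -/
import Mathlib

section
/- If G and G' are connected bipartite simple graphs, each having at least one edge, and their line graphs L(G) and L(G') are isomorphic, then G and G' are isomorphic; that is, the exceptional pair in Whitney's isomorphism theorem (K_3 and K_{1,3}) never occurs when both graphs are bipartite. -/
/-!
Once its vertices are 2-coloured, a bipartite graph without isolated vertices is glued from its
edges, each having one end of either colour. As there are no triangles, two edges `f`, `g` meeting
a third edge `e` share a vertex exactly when they meet `e` at the same end. Hence an isomorphism of
line graphs either keeps or interchanges the colours of the two ends of `e`, in a way compatible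
with all edges meeting `e`. Edges that meet make the same choice, so the choices together respect
the gluing, and the map on ends descends to an isomorphism of graphs.
-/

namespace WhitneyBipartite

open SimpleGraph

theorem nonempty_iso_of_surjective {S V W : Type*} {G : SimpleGraph V} {H : SimpleGraph W}
    {p : S → V} {q : S → W} (hp : p.Surjective) (hq : q.Surjective)
    (hker : ∀ x y, p x = p y ↔ q x = q y)
    (hadj : ∀ x y, G.Adj (p x) (p y) ↔ H.Adj (q x) (q y)) : Nonempty (G ≃g H) := by
  obtain ⟨F, hF⟩ : ∃ F : V → W, ∀ x, F (p x) = q x :=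
    ⟨fun v ↦ q (hp.hasRightInverse.choose v),
      fun x ↦ (hker _ _).1 (hp.hasRightInverse.choose_spec (p x))⟩
  have hinj : F.Injective := by
    intro v w h
    obtain ⟨⟨x, rfl⟩, ⟨y, rfl⟩⟩ := hp v, hp w
    rwa [hF, hF, ← hker] at h
  have hsurj : F.Surjective := fun w ↦ (hq w).elim fun x hx ↦ ⟨p x, (hF x).trans hx⟩
  have hbij : F.Bijective := ⟨hinj, hsurj⟩
  refine ⟨⟨Equiv.ofBijective F hbij, fun {v w} ↦ ?_⟩⟩
  obtain ⟨⟨x, rfl⟩, ⟨y, rfl⟩⟩ := hp v, hp w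
  rw [Equiv.ofBijective_apply, Equiv.ofBijective_apply, hF, hF, hadj]

section Endpoint

variable {V : Type*} {G : SimpleGraph V} (c : G.Coloring Bool)

theorem exists_mem_edge_color_eq (e : G.edgeSet) (b : Bool) : ∃ v ∈ (e : Sym2 V), c v = b := by
  obtain ⟨⟨v, w⟩, h⟩ := e
  have hvw : c v ≠ c w := c.valid h
  by_cases hv : c v = b
  · exact ⟨v, Sym2.mem_mk_left v w, hv⟩
  · have hw : c w = b := Bool.not_inj ((Bool.eq_not_of_ne hvw).symm.trans (Bool.eq_not_of_ne hv))
    exact ⟨w, Sym2.mem_mk_right v w, hw⟩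

/-- The end of colour `b` of the edge `e` of a 2-coloured graph. -/
noncomputable def endpoint (e : G.edgeSet) (b : Bool) : V :=
  (exists_mem_edge_color_eq c e b).choose

theorem endpoint_mem (e : G.edgeSet) (b : Bool) : endpoint c e b ∈ (e : Sym2 V) :=
  (exists_mem_edge_color_eq c e b).choose_spec.1

theorem color_endpoint (e : G.edgeSet) (b : Bool) : c (endpoint c e b) = b :=
  (exists_mem_edge_color_eq c e b).choose_spec.2

variable {c} {e f g : G.edgeSet} {b b' : Bool}

theorem color_eq_of_endpoint_eq (h : endpoint c e b = endpoint c f b') : b = b' := by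
  simpa only [color_endpoint] using congrArg c h

theorem coe_eq_mk_endpoint (e : G.edgeSet) (b : Bool) :
    (e : Sym2 V) = s(endpoint c e b, endpoint c e !b) := by
  refine (Sym2.mem_and_mem_iff fun h ↦ ?_).1 ⟨endpoint_mem c e b, endpoint_mem c e !b⟩
  exact Bool.not_ne_self b (color_eq_of_endpoint_eq h).symm

theorem mem_edge_iff {v : V} : v ∈ (e : Sym2 V) ↔ ∃ b, endpoint c e b = v := by
  rw [coe_eq_mk_endpoint (c := c) e false, Sym2.mem_iff, Bool.exists_bool, Bool.not_false,
    eq_comm, eq_comm (a := v)]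

theorem adj_iff_exists_endpoint {v w : V} :
    G.Adj v w ↔ ∃ e b, endpoint c e b = v ∧ endpoint c e (!b) = w := by
  constructor
  · intro h
    let e : G.edgeSet := ⟨s(v, w), h⟩
    obtain ⟨b, hv⟩ := mem_edge_iff (c := c) (e := e).1 (Sym2.mem_mk_left v w)
    have he : s(v, w) = s(endpoint c e b, endpoint c e !b) := coe_eq_mk_endpoint e b
    rw [hv] at he
    exact ⟨e, b, hv, (Sym2.congr_right.1 he).symm⟩
  · rintro ⟨e, b, rfl, rfl⟩
    rw [← mem_edgeSet, ← coe_eq_mk_endpoint]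
    exact e.2

theorem endpoint_surjective (hG : G.support = Set.univ) :
    (fun x : G.edgeSet × Bool ↦ endpoint c x.1 x.2).Surjective := by
  intro v
  obtain ⟨w, hvw⟩ := G.mem_support.1 (hG ▸ Set.mem_univ v)
  obtain ⟨e, b, hv, -⟩ := adj_iff_exists_endpoint.1 hvw
  exact ⟨(e, b), hv⟩

theorem color_eq_of_endpoint_eq_of_ne (hef : e ≠ f) (h : endpoint c e b = endpoint c f b)
    (h' : endpoint c e b' = endpoint c f b') : b = b' := by
  by_contra hb
  obtain rfl : b' = !b := Bool.eq_not_of_ne (Ne.symm hb)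
  exact hef (Subtype.ext (by rw [coe_eq_mk_endpoint e b, coe_eq_mk_endpoint f b, h, h']))

theorem exists_endpoint_eq_iff :
    (∃ b, endpoint c e b = endpoint c f b) ↔ e = f ∨ G.lineGraph.Adj e f := by
  rw [lineGraph_adj_iff_exists]
  constructor
  · rintro ⟨b, h⟩
    exact or_iff_not_imp_left.2 fun hef ↦
      ⟨hef, endpoint c e b, endpoint_mem c e b, h ▸ endpoint_mem c f b⟩
  · rintro (rfl | ⟨-, v, hve, hvf⟩)
    · exact ⟨false, rfl⟩
    · obtain ⟨b, rfl⟩ := mem_edge_iff (c := c).1 hve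
      obtain ⟨b', h⟩ := mem_edge_iff (c := c).1 hvf
      obtain rfl := color_eq_of_endpoint_eq h
      exact ⟨b', h.symm⟩

theorem eq_or_lineGraph_adj_iff_color_eq (hef : e ≠ f) (heg : e ≠ g)
    (hf : endpoint c e b = endpoint c f b) (hg : endpoint c e b' = endpoint c g b') :
    f = g ∨ G.lineGraph.Adj f g ↔ b = b' := by
  rw [← exists_endpoint_eq_iff (c := c)]
  constructor
  · rintro ⟨d, hd⟩
    by_contra hb
    obtain rfl : b' = !b := Bool.eq_not_of_ne (Ne.symm hb)
    -- Whatever its colour, a common end of `f` and `g` is an end of `e` as well.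
    obtain rfl | rfl := Bool.eq_or_eq_not d b
    · exact hb (color_eq_of_endpoint_eq_of_ne heg (hf.trans hd) hg)
    · exact hb (color_eq_of_endpoint_eq_of_ne hef hf (hg.trans hd.symm))
  · rintro rfl
    exact ⟨b, hf.symm.trans hg⟩

end Endpoint

section Twist

variable {V W : Type*} {G : SimpleGraph V} {H : SimpleGraph W}
  {c : G.Coloring Bool} {c' : H.Coloring Bool}

/-- The bit `t` says whether the map `φ` on edges keeps (`false`) or interchanges (`true`) the
colours at `e`: an edge `f` meets `e` at its end of colour `b` exactly when `φ f` meets `φ e` at its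
end of colour `t ^^ b`. Both bits qualify when `e` and `φ e` are isolated in the line graphs. -/
def IsTwistAt (c : G.Coloring Bool) (c' : H.Coloring Bool) (φ : G.edgeSet → H.edgeSet)
    (e : G.edgeSet) (t : Bool) : Prop :=
  ∀ f b, endpoint c e b = endpoint c f b ↔
    endpoint c' (φ e) (t ^^ b) = endpoint c' (φ f) (t ^^ b)

variable {φ : G.lineGraph ≃g H.lineGraph} {e f : G.edgeSet} {b s t : Bool}

theorem map_eq_or_lineGraph_adj_iff :
    φ e = φ f ∨ H.lineGraph.Adj (φ e) (φ f) ↔ e = f ∨ G.lineGraph.Adj e f := by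
  rw [φ.injective.eq_iff, φ.map_adj_iff]

theorem exists_endpoint_map_eq_iff :
    (∃ b, endpoint c' (φ e) b = endpoint c' (φ f) b) ↔
      ∃ b, endpoint c e b = endpoint c f b := by
  rw [exists_endpoint_eq_iff, exists_endpoint_eq_iff, map_eq_or_lineGraph_adj_iff]

theorem isTwistAt_of_forall_imp
    (h : ∀ f b, e ≠ f → endpoint c e b = endpoint c f b →
      endpoint c' (φ e) (t ^^ b) = endpoint c' (φ f) (t ^^ b)) :
    IsTwistAt c c' φ e t := by
  intro f b
  obtain rfl | hef := eq_or_ne e f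
  · exact iff_of_true rfl rfl
  refine ⟨h f b hef, fun hφ ↦ ?_⟩
  obtain ⟨d, hd⟩ := exists_endpoint_map_eq_iff (c := c).1 ⟨_, hφ⟩
  have htd : (t ^^ d) = (t ^^ b) :=
    color_eq_of_endpoint_eq_of_ne (φ.injective.ne hef) (h f d hef hd) hφ
  exact Bool.xor_right_inj.1 htd ▸ hd

variable (c c' φ e) in
theorem exists_isTwistAt : ∃ t, IsTwistAt c c' φ e t := by
  by_cases hmeet : ∃ f, e ≠ f ∧ ∃ b, endpoint c e b = endpoint c f b
  · obtain ⟨f, hef, b, hf⟩ := hmeet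
    obtain ⟨b', hφf⟩ := exists_endpoint_map_eq_iff (φ := φ) (c' := c').2 ⟨b, hf⟩
    refine ⟨b ^^ b', isTwistAt_of_forall_imp fun g d heg hg ↦ ?_⟩
    obtain ⟨d', hφg⟩ := exists_endpoint_map_eq_iff (φ := φ) (c' := c').2 ⟨d, hg⟩
    have hsame : b = d ↔ b' = d' := by
      rw [← eq_or_lineGraph_adj_iff_color_eq hef heg hf hg, ← map_eq_or_lineGraph_adj_iff (φ := φ),
        eq_or_lineGraph_adj_iff_color_eq (φ.injective.ne hef) (φ.injective.ne heg) hφf hφg]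
    have hxor : ∀ b b' d d' : Bool, (b = d ↔ b' = d') → (b ^^ b' ^^ d) = d' := by decide
    obtain rfl := hxor b b' d d' hsame
    exact hφg
  · exact ⟨false, isTwistAt_of_forall_imp fun f b hef h ↦ (hmeet ⟨f, hef, b, h⟩).elim⟩

theorem IsTwistAt.eq_of_endpoint_eq (hs : IsTwistAt c c' φ e s) (ht : IsTwistAt c c' φ f t)
    (hef : e ≠ f) (h : endpoint c e b = endpoint c f b) : s = t :=
  Bool.xor_left_inj.1 <| color_eq_of_endpoint_eq_of_ne (φ.injective.ne hef)
    ((hs f b).1 h) ((ht e b).1 h.symm).symm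

theorem endpoint_eq_iff_of_isTwistAt {τ : G.edgeSet → Bool} (hτ : ∀ e, IsTwistAt c c' φ e (τ e))
    (e f : G.edgeSet) (b d : Bool) :
    endpoint c e b = endpoint c f d ↔
      endpoint c' (φ e) (τ e ^^ b) = endpoint c' (φ f) (τ f ^^ d) := by
  suffices h : τ e = τ f → (endpoint c e b = endpoint c f d ↔
      endpoint c' (φ e) (τ e ^^ b) = endpoint c' (φ f) (τ f ^^ d)) by
    obtain rfl | hef := eq_or_ne e f
    · exact h rfl
    by_cases hmeet : ∃ b, endpoint c e b = endpoint c f b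
    · exact h (hmeet.elim fun _ hb ↦ (hτ e).eq_of_endpoint_eq (hτ f) hef hb)
    refine iff_of_false (fun heq ↦ ?_) fun heq ↦ ?_
    · exact hmeet ⟨b, color_eq_of_endpoint_eq heq ▸ heq⟩
    · rw [← color_eq_of_endpoint_eq heq] at heq
      exact hmeet (exists_endpoint_map_eq_iff.1 ⟨_, heq⟩)
  intro hτef
  rw [← hτef]
  constructor
  · intro heq
    obtain rfl := color_eq_of_endpoint_eq heq
    exact (hτ e f b).1 heq
  · intro heq
    obtain rfl : b = d := Bool.xor_right_inj.1 (color_eq_of_endpoint_eq heq)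
    exact (hτ e f b).2 heq

theorem twist_surjective {E E' : Type*} {φ : E → E'} (hφ : φ.Surjective) (τ : E → Bool) :
    (fun x : E × Bool ↦ (φ x.1, τ x.1 ^^ x.2)).Surjective := by
  rintro ⟨e', b⟩
  obtain ⟨e, rfl⟩ := hφ e'
  exact ⟨(e, τ e ^^ b), by simp⟩

theorem adj_endpoint_iff_of_isTwistAt {τ : G.edgeSet → Bool} (hτ : ∀ e, IsTwistAt c c' φ e (τ e))
    (e f : G.edgeSet) (b d : Bool) :
    G.Adj (endpoint c e b) (endpoint c f d) ↔
      H.Adj (endpoint c' (φ e) (τ e ^^ b)) (endpoint c' (φ f) (τ f ^^ d)) := by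
  rw [adj_iff_exists_endpoint (c := c), adj_iff_exists_endpoint (c := c'), ← Prod.exists',
    ← Prod.exists', (twist_surjective φ.surjective τ).exists]
  simp only [endpoint_eq_iff_of_isTwistAt hτ, Bool.xor_not]

end Twist

theorem support_eq_univ_of_edgeSet_nonempty {V : Type*} {G : SimpleGraph V}
    (hG : G.Preconnected) (he : G.edgeSet.Nonempty) : G.support = Set.univ := by
  obtain ⟨⟨v, w⟩, hvw⟩ := he
  have : Nontrivial V := Adj.nontrivial hvw
  exact hG.support_eq_univ

end WhitneyBipartite

open WhitneyBipartite in
theorem whitney_bipartite_general {α β : Type*} {G : SimpleGraph α} {G' : SimpleGraph β}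
    (hG : G.support = Set.univ) (hG' : G'.support = Set.univ)
    (hGbip : G.IsBipartite) (hG'bip : G'.IsBipartite) (φ : G.lineGraph ≃g G'.lineGraph) :
    Nonempty (G ≃g G') := by
  let c : G.Coloring Bool := hGbip.toColoring (by simp)
  let c' : G'.Coloring Bool := hG'bip.toColoring (by simp)
  choose τ hτ using exists_isTwistAt c c' φ
  have hc := endpoint_surjective (c := c) hG
  have hc' := endpoint_surjective (c := c') hG'
  exact nonempty_iso_of_surjective hc (hc'.comp (twist_surjective φ.surjective τ))
    (fun x y ↦ endpoint_eq_iff_of_isTwistAt hτ x.1 y.1 x.2 y.2)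
    (fun x y ↦ adj_endpoint_iff_of_isTwistAt hτ x.1 y.1 x.2 y.2)

/-- **Theorem (Whitney's isomorphism theorem for bipartite graphs).**
If `G` and `G'` are connected bipartite simple graphs, each having at least one edge, and their
line graphs `L(G)` and `L(G')` are isomorphic, then `G` and `G'` are isomorphic; i.e. the
exceptional pair (`K₃` and `K_{1,3}`) of Whitney's theorem never occurs when both graphs are
bipartite. -/
theorem whitney_bipartite {α β : Type*} (G : SimpleGraph α) (G' : SimpleGraph β)
    (hGconn : G.Connected) (hG'conn : G'.Connected)
    (hGbip : G.Colorable 2) (hG'bip : G'.Colorable 2)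
    (hGe : G.edgeSet.Nonempty) (hG'e : G'.edgeSet.Nonempty)
    (hiso : Nonempty (G.lineGraph ≃g G'.lineGraph)) :
    Nonempty (G ≃g G') := by
  obtain ⟨φ⟩ := hiso
  have hG := WhitneyBipartite.support_eq_univ_of_edgeSet_nonempty hGconn.preconnected hGe
  have hG' := WhitneyBipartite.support_eq_univ_of_edgeSet_nonempty hG'conn.preconnected hG'e
  exact whitney_bipartite_general hG hG' hGbip hG'bip φ
end

section
/- For any hypergraph G_H, the number of edges of its line expansion satisfies |E_l| = Σ_{v∈V} d(v)(d(v)−1)/2 + Σ_{e∈E} δ(e)(δ(e)−1)/2. -/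
open Finset

section

variable {V E : Type*} [Fintype V] [Fintype E] [DecidableEq V] [DecidableEq E]
  (h : V → E → Prop) [∀ v e, Decidable (h v e)]

/-- The line expansion of a hypergraph `(V, E, h)`: the simple graph whose vertices are the
incident vertex–hyperedge pairs, two distinct pairs being adjacent iff they share the vertex
or the hyperedge. -/
def lineExpansion : SimpleGraph {p : V × E // h p.1 p.2} where
  Adj p q := p ≠ q ∧ (p.1.1 = q.1.1 ∨ p.1.2 = q.1.2)
  symm := by
    refine ⟨?_⟩
    rintro p q ⟨hne, hor⟩
    exact ⟨hne.symm, hor.imp Eq.symm Eq.symm⟩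
  loopless := by
    refine ⟨?_⟩
    rintro p ⟨hne, -⟩
    exact hne rfl

instance : DecidableRel (lineExpansion h).Adj := fun p q =>
  inferInstanceAs (Decidable (p ≠ q ∧ (p.1.1 = q.1.1 ∨ p.1.2 = q.1.2)))

/-!
The incident pairs sharing a given vertex `v` form a clique on `d(v)` elements of the line
expansion, those sharing a given hyperedge `e` a clique on `δ(e)` elements, and these cliques cover
all edges. They are edge-disjoint, since two distinct pairs cannot agree in both coordinates, and
each clique on `n` elements contributes `n(n-1)/2` edges.
-/

/-- The disjoint union of the complete graphs on the fibres of `f`. Applied to the two coordinate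
projections of the incidence relation, it gives the adjacencies of the line expansion that come
from a common vertex and from a common hyperedge. -/
def fiberGraph {α ι : Type*} (f : α → ι) : SimpleGraph α where
  Adj a b := a ≠ b ∧ f a = f b
  symm := ⟨fun _ _ hab ↦ ⟨hab.1.symm, hab.2.symm⟩⟩
  loopless := ⟨fun _ haa ↦ haa.1 rfl⟩

namespace fiberGraph

variable {α ι κ : Type*}

theorem adj_iff {f : α → ι} {a b : α} : (fiberGraph f).Adj a b ↔ a ≠ b ∧ f a = f b :=
  Iff.rfl

theorem neighborFinset_eq [Fintype α] [DecidableEq α] [DecidableEq ι] (f : α → ι) (a : α)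
    [Fintype ((fiberGraph f).neighborSet a)] :
    (fiberGraph f).neighborFinset a = ({b | f b = f a} : Finset α).erase a := by
  ext b
  simp [adj_iff, eq_comm]

theorem degree_eq [Fintype α] [DecidableEq ι] (f : α → ι) (a : α)
    [Fintype ((fiberGraph f).neighborSet a)] :
    (fiberGraph f).degree a = #{b | f b = f a} - 1 := by
  classical
  rw [← SimpleGraph.card_neighborFinset_eq_degree, neighborFinset_eq,
    card_erase_of_mem (by simp)]

theorem card_edgeFinset_eq [Fintype α] [Fintype ι] [DecidableEq ι] (f : α → ι)
    [Fintype (fiberGraph f).edgeSet] :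
    #(fiberGraph f).edgeFinset = ∑ i, (#{a | f a = i}).choose 2 := by
  classical
  refine Nat.eq_of_mul_eq_mul_left two_pos ?_
  calc 2 * #(fiberGraph f).edgeFinset
      = ∑ a, (fiberGraph f).degree a := by
        convert! (fiberGraph f).sum_degrees_eq_twice_card_edges.symm
    _ = ∑ a, (#{b | f b = f a} - 1) := by simp only [degree_eq]
    _ = ∑ i, #{a | f a = i} * (#{a | f a = i} - 1) := by
        simp only [← sum_fiberwise' univ f fun i ↦ #{b | f b = i} - 1, sum_const, smul_eq_mul]
    _ = 2 * ∑ i, (#{a | f a = i}).choose 2 := by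
        simp only [mul_sum, Nat.choose_two_right,
          Nat.mul_div_cancel' (Nat.even_mul_pred_self _).two_dvd]

theorem disjoint_iff (f : α → ι) (g : α → κ) :
    Disjoint (fiberGraph f) (fiberGraph g) ↔ Function.Injective fun a ↦ (f a, g a) := by
  simp only [SimpleGraph.disjoint_left, adj_iff, Function.Injective, Prod.mk.injEq]
  grind

theorem card_edgeFinset_sup [Fintype α] [Fintype ι] [Fintype κ] [DecidableEq ι] [DecidableEq κ]
    {f : α → ι} {g : α → κ} (hfg : Function.Injective fun a ↦ (f a, g a))
    [Fintype (fiberGraph f ⊔ fiberGraph g).edgeSet] :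
    #(fiberGraph f ⊔ fiberGraph g).edgeFinset =
      ∑ i, (#{a | f a = i}).choose 2 + ∑ k, (#{a | g a = k}).choose 2 := by
  classical
  rw [SimpleGraph.edgeFinset_sup,
    card_union_of_disjoint (SimpleGraph.disjoint_edgeFinset.2 ((disjoint_iff f g).2 hfg)),
    card_edgeFinset_eq, card_edgeFinset_eq]

end fiberGraph

section Incidence

variable {α β : Type*} (r : α → β → Prop)

theorem lineExpansion_eq_sup_fiberGraph :
    lineExpansion r =
      fiberGraph (fun p : {p : α × β // r p.1 p.2} ↦ p.1.1) ⊔ fiberGraph (fun p ↦ p.1.2) := by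
  ext p q
  exact and_or_left

variable [Fintype α] [Fintype β] [∀ a b, Decidable (r a b)]

theorem card_filter_fst_eq [DecidableEq α] (a : α) :
    #{p : {p : α × β // r p.1 p.2} | p.1.1 = a} = #{b | r a b} :=
  card_bij (fun p _ ↦ p.1.2) (by grind) (by grind)
    fun b hb ↦ ⟨⟨(a, b), by simpa using hb⟩, by simp, rfl⟩

theorem card_filter_snd_eq [DecidableEq β] (b : β) :
    #{p : {p : α × β // r p.1 p.2} | p.1.2 = b} = #{a | r a b} :=
  card_bij (fun p _ ↦ p.1.1) (by grind) (by grind)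
    fun a ha ↦ ⟨⟨(a, b), by simpa using ha⟩, by simp, rfl⟩

end Incidence

/-- **Theorem.** The number of edges of the line expansion of a hypergraph satisfies
`|E_l| = Σ_v d(v)(d(v)−1)/2 + Σ_e δ(e)(δ(e)−1)/2`. -/
theorem card_lineExpansion_edges
    (d : V → ℕ) (hd : ∀ v, d v = ∑ e, if h v e then 1 else 0)
    (δ : E → ℕ) (hδ : ∀ e, δ e = ∑ v, if h v e then 1 else 0) :
    (lineExpansion h).edgeFinset.card =
      ∑ v, d v * (d v - 1) / 2 + ∑ e, δ e * (δ e - 1) / 2 := by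
  classical
  calc #(lineExpansion h).edgeFinset
      = #(fiberGraph (fun p : {p : V × E // h p.1 p.2} ↦ p.1.1) ⊔
          fiberGraph (fun p ↦ p.1.2)).edgeFinset := by
        congr! 2
        exact lineExpansion_eq_sup_fiberGraph h
    _ = ∑ v, (#{e | h v e}).choose 2 + ∑ e, (#{v | h v e}).choose 2 := by
        simp only [fiberGraph.card_edgeFinset_sup Subtype.val_injective,
          card_filter_fst_eq, card_filter_snd_eq]
    _ = ∑ v, d v * (d v - 1) / 2 + ∑ e, δ e * (δ e - 1) / 2 := by
        simp only [hd, hδ, ← card_filter, Nat.choose_two_right]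

end
end

section
/- Let G_H be a hypergraph in which every vertex lies in at least one hyperedge, let w_v, w_e > 0, let B be the V_l × V_l matrix with B((v,e),(v',e')) = w_e if v = v' and e ≠ e', B((v,e),(v',e')) = w_v if e = e' and v ≠ v', and 0 otherwise, and let D be the V_l × V_l diagonal matrix with D((v,e),(v,e)) = w_e d(v) + w_v δ(e). Then for all distinct vertices u, u' ∈ V, the vertex-level propagation matrix obtained by projecting, propagating, and back-projecting satisfies (P_v' D⁻¹ B P_v)(u,u') = [ Σ_{e∈E} w_v h(u,e) h(u',e) / ( δ(e) · (w_v δ(e) + w_e d(u)) ) ] / [ Σ_{e∈E} h(u,e) / δ(e) ]. -/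
/-!
Projecting a line-node matrix onto `u'` sums its columns over the line nodes at `u'`, and
back-projecting to `u` averages its rows over the line nodes at `u` with weights `1 / δ(e)`. For
`u ≠ u'` a line node `(u, e)` is adjacent to at most one line node at `u'`, namely `(u', e)`, so
only the hyperedges through both vertices contribute, each with the weight `w_v`.
-/

open Finset Matrix

section

variable {V E : Type*} [Fintype V] [Fintype E] [DecidableEq V] [DecidableEq E]
  (h : V → E → Prop) [∀ v e, Decidable (h v e)]

/-- The line nodes of the line expansion: incident vertex–hyperedge pairs. -/
abbrev LineNode := {p : V × E // h p.1 p.2}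

/-- The vertex degree `d(v) = Σ_e h(v,e)`. -/
def vdeg (v : V) : ℕ := ∑ e, if h v e then 1 else 0

/-- The hyperedge degree `δ(e) = Σ_v h(v,e)`. -/
def edeg (e : E) : ℕ := ∑ v, if h v e then 1 else 0

/-- The vertex projection matrix `P_v`, with `P_v((v,e), u) = 1` iff `u = v`. -/
def projV : Matrix (LineNode h) V ℝ := fun p u => if p.1.1 = u then 1 else 0

/-- The vertex back-projection matrix `P_v'`, with
`P_v'(u, (v,e)) = (1/δ(e)) / (Σ_{e' : h(u,e')=1} 1/δ(e'))` if `u = v`, and `0` otherwise. -/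
noncomputable def backProjV : Matrix V (LineNode h) ℝ := fun u p =>
  if p.1.1 = u then
    ((edeg h p.1.2 : ℝ))⁻¹ / (∑ e', if h u e' then ((edeg h e' : ℝ))⁻¹ else 0)
  else 0

/-- The weighted adjacency matrix `B` of the line expansion: distinct line nodes are joined with
weight `w_e` if they share a vertex and `w_v` if they share a hyperedge. -/
def lineAdj (w_v w_e : ℝ) : Matrix (LineNode h) (LineNode h) ℝ :=
  of fun p q =>
    if p.1.1 = q.1.1 ∧ p.1.2 ≠ q.1.2 then w_e
    else if p.1.2 = q.1.2 ∧ p.1.1 ≠ q.1.1 then w_v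
    else 0

/-- The diagonal normalization matrix `D` of the line expansion. Its entries are
`w_e d(v) + w_v δ(e)`, the row sums of `lineAdj` once each line node `(v, e)` is given a loop of
weight `w_v + w_e`. -/
def lineDeg (w_v w_e : ℝ) : Matrix (LineNode h) (LineNode h) ℝ :=
  diagonal fun p => w_e * (vdeg h p.1.1 : ℝ) + w_v * (edeg h p.1.2 : ℝ)

omit [Fintype V] [DecidableEq V] [DecidableEq E] in
theorem vdeg_pos {v : V} {e : E} (he : h v e) : 0 < vdeg h v :=
  sum_pos' (fun _ _ => Nat.zero_le _) ⟨e, mem_univ e, by simp [he]⟩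

theorem isUnit_lineDeg {w_v w_e : ℝ} (hwv : 0 ≤ w_v) (hwe : 0 < w_e) :
    IsUnit (lineDeg h w_v w_e) := by
  refine isUnit_diagonal.2 (Pi.isUnit_iff.2 fun p => IsUnit.mk0 _ ?_)
  have hd : 0 < vdeg h p.1.1 := vdeg_pos h p.2
  positivity

theorem inv_lineDeg {w_v w_e : ℝ} (hD : IsUnit (lineDeg h w_v w_e)) :
    (lineDeg h w_v w_e)⁻¹ =
      diagonal fun p => (w_e * (vdeg h p.1.1 : ℝ) + w_v * (edeg h p.1.2 : ℝ))⁻¹ := by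
  have hne := Pi.isUnit_iff.1 (isUnit_diagonal.1 hD)
  refine inv_eq_right_inv ?_
  rw [lineDeg, diagonal_mul_diagonal, ← diagonal_one]
  exact congrArg diagonal (funext fun p => mul_inv_cancel₀ (hne p).ne_zero)

omit [DecidableEq V] [DecidableEq E] in
theorem sum_lineNode {M : Type*} [AddCommMonoid M] (f : LineNode h → M) :
    ∑ p, f p = ∑ v, ∑ e, if he : h v e then f ⟨(v, e), he⟩ else 0 := by
  rw [← Fintype.sum_prod_type' fun v e => if he : h v e then f ⟨(v, e), he⟩ else 0]
  refine Fintype.sum_of_injective Subtype.val Subtype.val_injective _ _ ?_ fun p => ?_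
  · exact fun q hq => dif_neg fun he => hq ⟨⟨q, he⟩, rfl⟩
  · simp only [dif_pos p.2]

omit [DecidableEq E] in
theorem sum_lineNode_ite_fst_eq {M : Type*} [AddCommMonoid M] (u : V) (f : LineNode h → M) :
    (∑ p : LineNode h, if p.1.1 = u then f p else 0) =
      ∑ e, if he : h u e then f ⟨(u, e), he⟩ else 0 := by
  rw [sum_lineNode, Fintype.sum_eq_single u fun v hv => by simp [hv]]
  simp

omit [DecidableEq E] in
theorem mul_projV_apply {m : Type*} (M : Matrix m (LineNode h) ℝ) (i : m) (u : V) :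
    (M * projV h) i u = ∑ e, if he : h u e then M i ⟨(u, e), he⟩ else 0 := by
  simp only [mul_apply, projV, mul_ite, mul_one, mul_zero, sum_lineNode_ite_fst_eq]

omit [DecidableEq E] in
theorem backProjV_mul_apply {n : Type*} (M : Matrix (LineNode h) n ℝ) (u : V) (j : n) :
    (backProjV h * M) u j =
      (∑ e, if he : h u e then (edeg h e : ℝ)⁻¹ * M ⟨(u, e), he⟩ j else 0) /
        ∑ e, if h u e then (edeg h e : ℝ)⁻¹ else 0 := by
  simp only [mul_apply, backProjV, ite_mul, zero_mul, sum_lineNode_ite_fst_eq, div_mul_eq_mul_div,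
    sum_div]
  exact sum_congr rfl fun e _ => by split_ifs <;> simp

theorem lineAdj_mul_projV_apply (w_v w_e : ℝ) {p : LineNode h} {u : V} (hp : p.1.1 ≠ u) :
    (lineAdj h w_v w_e * projV h) p u = if h u p.1.2 then w_v else 0 := by
  rw [mul_projV_apply, Fintype.sum_eq_single p.1.2 fun e he => by simp [lineAdj, hp, he.symm]]
  simp [lineAdj, hp]

theorem inv_lineDeg_mul_lineAdj_mul_projV_apply {w_v w_e : ℝ} (hD : IsUnit (lineDeg h w_v w_e))
    {u u' : V} (huu' : u ≠ u') {e : E} (he : h u e) :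
    ((lineDeg h w_v w_e)⁻¹ * (lineAdj h w_v w_e * projV h)) ⟨(u, e), he⟩ u' =
      if h u' e then w_v / (w_v * (edeg h e : ℝ) + w_e * (vdeg h u : ℝ)) else 0 := by
  rw [inv_lineDeg h hD, diagonal_mul, lineAdj_mul_projV_apply h w_v w_e huu', mul_ite, mul_zero,
    inv_mul_eq_div, add_comm]

theorem vertex_level_propagation_general
    (w_v w_e : ℝ) (hD : IsUnit (lineDeg h w_v w_e))
    (u u' : V) (_hu : ∃ e, h u e) (huu' : u ≠ u') :
    (backProjV h * (lineDeg h w_v w_e)⁻¹ * lineAdj h w_v w_e * projV h) u u' =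
      (∑ e, w_v * (if h u e then (1 : ℝ) else 0) * (if h u' e then (1 : ℝ) else 0) /
          ((edeg h e : ℝ) * (w_v * (edeg h e : ℝ) + w_e * (vdeg h u : ℝ)))) /
        (∑ e, (if h u e then (1 : ℝ) else 0) / (edeg h e : ℝ)) := by
  rw [Matrix.mul_assoc, Matrix.mul_assoc, backProjV_mul_apply]
  simp only [inv_lineDeg_mul_lineAdj_mul_projV_apply h hD huu']
  congr 1 <;> refine sum_congr rfl fun e _ => ?_
  · by_cases he : h u e <;> by_cases he' : h u' e <;>
      simp [he, he', inv_mul_eq_div, div_div, mul_comm]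
  · simp only [ite_div, one_div, zero_div]

/-- **Theorem.** Let `G_H` be a hypergraph in which every vertex lies in at least one hyperedge,
let `w_v, w_e > 0`, let `B` be the line-node matrix with `B((v,e),(v',e')) = w_e` if `v = v'` and
`e ≠ e'`, `w_v` if `e = e'` and `v ≠ v'`, and `0` otherwise, and let `D` be the diagonal matrix
with `D((v,e),(v,e)) = w_e d(v) + w_v δ(e)`.  Then for all distinct `u, u' ∈ V`, the vertex-level
propagation matrix satisfies
`(P_v' D⁻¹ B P_v)(u,u') = [Σ_e w_v h(u,e) h(u',e) / (δ(e)(w_v δ(e) + w_e d(u)))] / [Σ_e h(u,e)/δ(e)]`. -/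
theorem vertex_level_propagation
    (w_v w_e : ℝ) (hwv : 0 < w_v) (hwe : 0 < w_e)
    (hV : ∀ v, ∃ e, h v e)
    (B : Matrix (LineNode h) (LineNode h) ℝ)
    (hB : ∀ p q : LineNode h, B p q =
      if p.1.1 = q.1.1 ∧ p.1.2 ≠ q.1.2 then w_e
      else if p.1.2 = q.1.2 ∧ p.1.1 ≠ q.1.1 then w_v
      else 0)
    (D : Matrix (LineNode h) (LineNode h) ℝ)
    (hD : D = Matrix.diagonal fun p : LineNode h =>
      w_e * (vdeg h p.1.1 : ℝ) + w_v * (edeg h p.1.2 : ℝ))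
    (u u' : V) (huu' : u ≠ u') :
    (backProjV h * D⁻¹ * B * projV h) u u' =
      (∑ e, w_v * (if h u e then (1 : ℝ) else 0) * (if h u' e then (1 : ℝ) else 0) /
          ((edeg h e : ℝ) * (w_v * (edeg h e : ℝ) + w_e * (vdeg h u : ℝ)))) /
        (∑ e, (if h u e then (1 : ℝ) else 0) / (edeg h e : ℝ)) := by
  obtain rfl : B = lineAdj h w_v w_e := Matrix.ext hB
  obtain rfl : D = lineDeg h w_v w_e := hD
  exact vertex_level_propagation_general h w_v w_e (isUnit_lineDeg h hwv.le hwe) u u' (hV u) huu'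

end
end
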